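/- arXiv:1003.1453 — 2 statements merged into one kernel-verified Lean document; each statement's English description precedes it below -/
import Mathlib

section
/- Let r₁ > 0 and δ ∈ (−π/2, 0). Define R₊(ρ,ζ) = √((r₁−ζ)² + ρ²), R₋(ρ,ζ) = √((−r₁−ζ)² + ρ²), and the Kerr Ernst potential f(ρ,ζ) = (R₊e^{−iδ} + R₋e^{iδ} − 2r₁)/(R₊e^{−iδ} + R₋e^{iδ} + 2r₁). Then for every (ρ,ζ) with ρ > 0 the denominator R₊e^{−iδ} + R₋e^{iδ} + 2r₁ is nonzero (indeed its real part equals (R₊+R₋)cos δ + 2r₁ > 0), and f satisfies the Ernst equation at (ρ,ζ): Re f · (∂²f/∂ρ² + ∂²f/∂ζ² + (1/ρ)∂f/∂ρ) = (∂f/∂ρ)² + (∂f/∂ζ)². -/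
/-!
With `N = R₊e^{−iδ} + R₋e^{iδ}` one has `f = (N − 2r₁)/(N + 2r₁)`, and the Ernst equation for `f`
is equivalent to `(|N|² − 4r₁²) ΔN = 2 N̄ (∇N)²`, where `Δ` is the axisymmetric Laplacian.
Since `R₊`, `R₋` are distances to the points `(0, ±r₁)`, they satisfy `ΔR = 2/R` and `|∇R|² = 1`.
Hence `ΔN = 2N̄/(R₊R₋)`, because `e^{iδ}` and `e^{−iδ}` are conjugate, and the
cross term `∇R₊·∇R₋ = (ρ² + ζ² − r₁²)/(R₊R₋)` together with `R₊² + R₋² = 2(ρ² + ζ² + r₁²)` gives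
`|N|² − 4r₁² = R₊R₋ (∇N)²`, which is the required identity. The lemmas `hasDerivAt_dist`,
`hasDerivAt_dist_deriv` differentiate the distances, `deriv_cayley`, `deriv_deriv_cayley` the
fraction, and `ernst_algebra` is the resulting polynomial identity.
-/

open Real Complex

/-- `R₊(ρ,ζ) = √((r₁−ζ)² + ρ²)`. -/
noncomputable def Rplus (r₁ ρ ζ : ℝ) : ℝ := Real.sqrt ((r₁ - ζ) ^ 2 + ρ ^ 2)

/-- `R₋(ρ,ζ) = √((−r₁−ζ)² + ρ²)`. -/
noncomputable def Rminus (r₁ ρ ζ : ℝ) : ℝ := Real.sqrt ((-r₁ - ζ) ^ 2 + ρ ^ 2)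

/-- Denominator `R₊e^{−iδ} + R₋e^{iδ} + 2r₁` of the Kerr Ernst potential. -/
noncomputable def kerrDen (r₁ δ ρ ζ : ℝ) : ℂ :=
  (Rplus r₁ ρ ζ : ℂ) * Complex.exp (-Complex.I * δ) +
    (Rminus r₁ ρ ζ : ℂ) * Complex.exp (Complex.I * δ) + 2 * r₁

/-- The Kerr Ernst potential
`f(ρ,ζ) = (R₊e^{−iδ} + R₋e^{iδ} − 2r₁)/(R₊e^{−iδ} + R₋e^{iδ} + 2r₁)`. -/
noncomputable def kerrF (r₁ δ ρ ζ : ℝ) : ℂ :=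
  ((Rplus r₁ ρ ζ : ℂ) * Complex.exp (-Complex.I * δ) +
    (Rminus r₁ ρ ζ : ℂ) * Complex.exp (Complex.I * δ) - 2 * r₁) / kerrDen r₁ δ ρ ζ

/-- In either coordinate direction `R₊` and `R₋` have the form `√((x − s)² + k)`. -/
lemma hasDerivAt_dist (s k x : ℝ) (h : 0 < (x - s) ^ 2 + k) :
    HasDerivAt (fun x => Real.sqrt ((x - s) ^ 2 + k)) ((x - s) / Real.sqrt ((x - s) ^ 2 + k)) x := by
  have h1 : HasDerivAt (fun x : ℝ => (x - s) ^ 2 + k) (2 * (x - s)) x := by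
    simpa using (((hasDerivAt_id x).sub_const s).pow 2).add_const k
  convert h1.sqrt h.ne' using 1
  have := (Real.sqrt_pos.2 h).ne'
  field_simp

lemma hasDerivAt_dist_deriv (s k x : ℝ) (h : 0 < (x - s) ^ 2 + k) :
    HasDerivAt (fun x => (x - s) / Real.sqrt ((x - s) ^ 2 + k))
      (1 / Real.sqrt ((x - s) ^ 2 + k) - (x - s) ^ 2 / Real.sqrt ((x - s) ^ 2 + k) ^ 3) x := by
  have h0 := (Real.sqrt_pos.2 h).ne'
  refine (((hasDerivAt_id x).sub_const s).div (hasDerivAt_dist s k x h) h0).congr_deriv ?_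
  simp only [id]
  field_simp

lemma deriv_cayley {g : ℝ → ℂ} {g1 c : ℂ} {x : ℝ} (hg : HasDerivAt g g1 x) (h0 : g x + c ≠ 0) :
    deriv (fun x => (g x - c) / (g x + c)) x = 2 * c * g1 / (g x + c) ^ 2 := by
  refine ((hg.sub_const c).div (hg.add_const c) h0).deriv.trans ?_
  ring

lemma deriv_deriv_cayley {g g1 : ℝ → ℂ} {g2 c : ℂ} {x : ℝ}
    (hg : ∀ᶠ y in nhds x, HasDerivAt g (g1 y) y) (hg1 : HasDerivAt g1 g2 x)
    (h0 : ∀ y, g y + c ≠ 0) :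
    deriv (fun y => deriv (fun x => (g x - c) / (g x + c)) y) x =
      2 * c * (g2 / (g x + c) ^ 2 - 2 * g1 x ^ 2 / (g x + c) ^ 3) := by
  have he : (fun y => deriv (fun x => (g x - c) / (g x + c)) y) =ᶠ[nhds x]
      fun y => 2 * c * g1 y / (g y + c) ^ 2 := hg.mono fun y hy => deriv_cayley hy (h0 y)
  rw [he.deriv_eq]
  have h := (hg1.const_mul (2 * c)).div ((hg.self_of_nhds.add_const c).pow 2)
    (pow_ne_zero 2 (h0 x))
  refine (HasDerivAt.deriv h).trans ?_
  have := h0 x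
  simp only [Pi.pow_apply]
  field_simp
  push_cast
  ring

/-- First and second derivatives along a line of `F = (N − c)/(N + c)`, where
`N = aP + bM` with `P = √((x − s)² + k)` and `M = √((x − t)² + l)`. -/
lemma deriv_line {a b c : ℂ} {s k t l x : ℝ}
    (hP : ∀ᶠ y in nhds x, 0 < (y - s) ^ 2 + k) (hM : ∀ᶠ y in nhds x, 0 < (y - t) ^ 2 + l)
    {F : ℝ → ℂ} {N : ℝ → ℂ}
    (hN : ∀ y, N y = (Real.sqrt ((y - s) ^ 2 + k) : ℂ) * a + (Real.sqrt ((y - t) ^ 2 + l) : ℂ) * b)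
    (hF : ∀ y, F y = (N y - c) / (N y + c)) (h0 : ∀ y, N y + c ≠ 0)
    {P M : ℝ} (hPe : Real.sqrt ((x - s) ^ 2 + k) = P) (hMe : Real.sqrt ((x - t) ^ 2 + l) = M) :
    deriv F x = 2 * c * (((x - s) / P : ℝ) * a + ((x - t) / M : ℝ) * b) / (N x + c) ^ 2 ∧
    deriv (fun y => deriv F y) x = 2 * c *
      ((((1 / P - (x - s) ^ 2 / P ^ 3 : ℝ) * a + (1 / M - (x - t) ^ 2 / M ^ 3 : ℝ) * b)) /
        (N x + c) ^ 2 - 2 * (((x - s) / P : ℝ) * a + ((x - t) / M : ℝ) * b) ^ 2 /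
        (N x + c) ^ 3) := by
  subst hPe hMe
  obtain rfl : F = fun y => (N y - c) / (N y + c) := funext hF
  obtain ⟨N1, hN1⟩ : ∃ N1 : ℝ → ℂ, N1 = fun y =>
      (((y - s) / Real.sqrt ((y - s) ^ 2 + k) : ℝ) : ℂ) * a +
        (((y - t) / Real.sqrt ((y - t) ^ 2 + l) : ℝ) : ℂ) * b := ⟨_, rfl⟩
  have hg : ∀ᶠ y in nhds x, HasDerivAt N (N1 y) y := by
    filter_upwards [hP, hM] with y h1 h2
    rw [funext hN, hN1]
    exact ((hasDerivAt_dist s k y h1).ofReal_comp.mul_const a).add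
      ((hasDerivAt_dist t l y h2).ofReal_comp.mul_const b)
  have hg1 : HasDerivAt N1
      (((1 / Real.sqrt ((x - s) ^ 2 + k) - (x - s) ^ 2 / Real.sqrt ((x - s) ^ 2 + k) ^ 3 : ℝ) : ℂ)
          * a +
        ((1 / Real.sqrt ((x - t) ^ 2 + l) - (x - t) ^ 2 / Real.sqrt ((x - t) ^ 2 + l) ^ 3 : ℝ) : ℂ)
          * b) x := by
    rw [hN1]
    exact ((hasDerivAt_dist_deriv s k x hP.self_of_nhds).ofReal_comp.mul_const a).add
      ((hasDerivAt_dist_deriv t l x hM.self_of_nhds).ofReal_comp.mul_const b)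
  have h1 := deriv_cayley hg.self_of_nhds (h0 x)
  have h2 := deriv_deriv_cayley hg hg1 h0
  rw [hN1] at h1 h2
  exact ⟨h1, h2⟩

/-- `Re f = (|N|² − c²)/|N + c|²` for `f = (N − c)/(N + c)`, with `N'` the conjugate of `N`. -/
lemma re_cayley {N N' : ℂ} {c : ℝ} (hN' : (starRingEnd ℂ) N = N') (h : N + c ≠ 0) :
    (((N - c) / (N + c)).re : ℂ) = (N * N' - c ^ 2) / ((N + c) * (N' + c)) ∧ N' + c ≠ 0 := by
  have h' : N' + c ≠ 0 := by
    have := (map_ne_zero (starRingEnd ℂ)).2 h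
    simpa [hN'] using this
  refine ⟨?_, h'⟩
  rw [Complex.re_eq_add_conj]
  simp only [map_div₀, map_sub, map_add, hN', Complex.conj_ofReal]
  field_simp
  ring

/-- The Ernst equation for `f = (N − c)/(N + c)`: here `N'` stands for the conjugate of `N`,
`L` for `ΔN`, `u` and `v` for the partial derivatives of `N`, and `Q` for `R₊R₋`. -/
lemma ernst_algebra {N N' c L G Q u v : ℂ} (hD : N + c ≠ 0) (hD' : N' + c ≠ 0)
    (hG : u ^ 2 + v ^ 2 = G) (hL : Q * L = 2 * N') (hNG : N * N' - c ^ 2 = Q * G) :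
    (N * N' - c ^ 2) / ((N + c) * (N' + c)) *
      (2 * c * (L / (N + c) ^ 2 - 2 * (u ^ 2 + v ^ 2) / (N + c) ^ 3)) =
    (2 * c * u / (N + c) ^ 2) ^ 2 + (2 * c * v / (N + c) ^ 2) ^ 2 := by
  have key : (N * N' - c ^ 2) * L = 2 * N' * G := by rw [hNG, ← hL]; ring
  have e : (2 * c * u / (N + c) ^ 2) ^ 2 + (2 * c * v / (N + c) ^ 2) ^ 2 =
      4 * c ^ 2 * G / (N + c) ^ 4 := by rw [← hG]; field_simp; ring
  rw [e, hG]
  field_simp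
  linear_combination 2 * c * (N + c) * key

/-- The Kerr Ernst potential has nonvanishing denominator (of positive real part
`(R₊+R₋)cos δ + 2r₁`) and satisfies the Ernst equation
`Re f · (f_ρρ + f_ζζ + (1/ρ) f_ρ) = f_ρ² + f_ζ²` for `ρ > 0`. -/
theorem kerr_satisfies_ernst (r₁ δ : ℝ) (hr₁ : 0 < r₁)
    (hδ : δ ∈ Set.Ioo (-(Real.pi / 2)) 0) :
    ∀ ρ ζ : ℝ, 0 < ρ →
      ((kerrDen r₁ δ ρ ζ).re = (Rplus r₁ ρ ζ + Rminus r₁ ρ ζ) * Real.cos δ + 2 * r₁ ∧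
        0 < (kerrDen r₁ δ ρ ζ).re ∧ kerrDen r₁ δ ρ ζ ≠ 0) ∧
      ((kerrF r₁ δ ρ ζ).re : ℂ) *
          (deriv (fun x => deriv (fun x' => kerrF r₁ δ x' ζ) x) ρ +
            deriv (fun y => deriv (fun y' => kerrF r₁ δ ρ y') y) ζ +
            (1 / (ρ : ℂ)) * deriv (fun x => kerrF r₁ δ x ζ) ρ) =
        (deriv (fun x => kerrF r₁ δ x ζ) ρ) ^ 2 +
          (deriv (fun y => kerrF r₁ δ ρ y) ζ) ^ 2 := by
  intro ρ ζ hρ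
  have hcos : 0 < Real.cos δ :=
    Real.cos_pos_of_mem_Ioo ⟨hδ.1, hδ.2.trans (by positivity)⟩
  have hre : ∀ x y, (kerrDen r₁ δ x y).re =
      (Rplus r₁ x y + Rminus r₁ x y) * Real.cos δ + 2 * r₁ := by
    intro x y
    simp [kerrDen, Complex.exp_re]
    ring
  have hpos : ∀ x y, 0 < (kerrDen r₁ δ x y).re := by
    intro x y
    rw [hre]
    have h1 : 0 ≤ Rplus r₁ x y := Real.sqrt_nonneg _
    have h2 : 0 ≤ Rminus r₁ x y := Real.sqrt_nonneg _
    positivity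
  have hne : ∀ x y, kerrDen r₁ δ x y ≠ 0 := by
    intro x y h
    have := hpos x y
    simp [h] at this
  refine ⟨⟨hre ρ ζ, hpos ρ ζ, hne ρ ζ⟩, ?_⟩
  set a := Complex.exp (-Complex.I * δ) with ha
  set b := Complex.exp (Complex.I * δ) with hb
  have hab : a * b = 1 := by rw [ha, hb, ← Complex.exp_add]; simp
  have hconja : (starRingEnd ℂ) a = b := by rw [ha, hb, ← Complex.exp_conj]; simp
  have hconjb : (starRingEnd ℂ) b = a := by rw [← hconja, Complex.conj_conj]
  set P := Rplus r₁ ρ ζ with hP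
  set M := Rminus r₁ ρ ζ with hM
  have hP2 : P ^ 2 = (r₁ - ζ) ^ 2 + ρ ^ 2 := Real.sq_sqrt (by positivity)
  have hM2 : M ^ 2 = (-r₁ - ζ) ^ 2 + ρ ^ 2 := Real.sq_sqrt (by positivity)
  have hP0 : 0 < P := Real.sqrt_pos.2 (by positivity)
  have hM0 : 0 < M := Real.sqrt_pos.2 (by positivity)
  have hFN : ∀ x y, kerrF r₁ δ x y =
      (((Rplus r₁ x y : ℂ) * a + (Rminus r₁ x y : ℂ) * b) - (2 * r₁ : ℝ)) /
      (((Rplus r₁ x y : ℂ) * a + (Rminus r₁ x y : ℂ) * b) + (2 * r₁ : ℝ)) := by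
    intro x y; simp [kerrF, kerrDen, ha, hb]
  have hD : ∀ x y, ((Rplus r₁ x y : ℂ) * a + (Rminus r₁ x y : ℂ) * b) + (2 * r₁ : ℝ) ≠ 0 := by
    intro x y; simpa [kerrDen, ha, hb] using hne x y
  -- Derivatives in `ρ`: both distances have `s = 0`, and positivity holds for nearby `ρ`.
  have hev : ∀ k : ℝ, 0 ≤ k → ∀ᶠ y in nhds ρ, 0 < (y - 0) ^ 2 + k := by
    intro k hk
    filter_upwards [lt_mem_nhds hρ] with y hy
    rw [sub_zero]
    positivity
  obtain ⟨d1, d2⟩ := deriv_line (a := a) (b := b) (c := (2 * r₁ : ℝ)) (x := ρ)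
    (hev _ (sq_nonneg (r₁ - ζ))) (hev _ (sq_nonneg (-r₁ - ζ)))
    (F := fun x => kerrF r₁ δ x ζ)
    (N := fun x => (Rplus r₁ x ζ : ℂ) * a + (Rminus r₁ x ζ : ℂ) * b)
    (fun y => by simp only [Rplus, Rminus, sub_zero, add_comm]) (fun y => hFN y ζ)
    (fun y => hD y ζ) (P := P) (M := M)
    (by rw [hP, Rplus, sub_zero, add_comm]) (by rw [hM, Rminus, sub_zero, add_comm])
  -- Derivatives in `ζ`: the distances have `s = r₁` and `s = -r₁`.
  obtain ⟨e1, e2⟩ := deriv_line (a := a) (b := b) (c := (2 * r₁ : ℝ)) (x := ζ)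
    (s := r₁) (t := -r₁) (k := ρ ^ 2) (l := ρ ^ 2)
    (.of_forall fun y => by positivity) (.of_forall fun y => by positivity)
    (F := fun y => kerrF r₁ δ ρ y)
    (N := fun y => (Rplus r₁ ρ y : ℂ) * a + (Rminus r₁ ρ y : ℂ) * b)
    (fun y => by simp only [Rplus, Rminus, sub_sq_comm]) (fun y => hFN ρ y)
    (fun y => hD ρ y) (P := P) (M := M)
    (by rw [hP, Rplus, sub_sq_comm]) (by rw [hM, Rminus, sub_sq_comm])
  rw [d1, d2, e1, e2, hFN ρ ζ]
  simp only [← hP, ← hM]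
  obtain ⟨hRe, hD'⟩ := re_cayley (N := P * a + M * b) (N' := P * b + M * a) (c := 2 * r₁)
    (by simp [hconja, hconjb]) (hD ρ ζ)
  rw [hRe]
  have cP : (P : ℂ) ≠ 0 := by exact_mod_cast hP0.ne'
  have cM : (M : ℂ) ≠ 0 := by exact_mod_cast hM0.ne'
  have cρ : (ρ : ℂ) ≠ 0 := by exact_mod_cast hρ.ne'
  have cP2 : (P : ℂ) ^ 2 = (r₁ - ζ) ^ 2 + ρ ^ 2 := by exact_mod_cast hP2
  have cM2 : (M : ℂ) ^ 2 = (-r₁ - ζ) ^ 2 + ρ ^ 2 := by exact_mod_cast hM2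
  -- The axisymmetric Laplacian of each distance `R` is `2/R`.
  have lapP : (1 / P - (ρ - 0) ^ 2 / P ^ 3 + (1 / P - (ζ - r₁) ^ 2 / P ^ 3) +
      1 / ρ * ((ρ - 0) / P) : ℝ) = 2 / P := by
    field_simp
    linear_combination ρ * hP2
  have lapM : (1 / M - (ρ - 0) ^ 2 / M ^ 3 + (1 / M - (ζ - -r₁) ^ 2 / M ^ 3) +
      1 / ρ * ((ρ - 0) / M) : ℝ) = 2 / M := by
    field_simp
    linear_combination ρ * hM2
  have hG : (((ρ - 0) / P : ℝ) * a + ((ρ - 0) / M : ℝ) * b) ^ 2 +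
      (((ζ - r₁) / P : ℝ) * a + ((ζ - -r₁) / M : ℝ) * b) ^ 2 =
      a ^ 2 + b ^ 2 + 2 * (ρ ^ 2 + ζ ^ 2 - r₁ ^ 2) / (P * M) := by
    have gP : (((ρ - 0) / P : ℝ) : ℂ) ^ 2 + ((ζ - r₁) / P : ℝ) ^ 2 = 1 := by
      push_cast
      field_simp
      linear_combination -cP2
    have gM : (((ρ - 0) / M : ℝ) : ℂ) ^ 2 + ((ζ - -r₁) / M : ℝ) ^ 2 = 1 := by
      push_cast
      field_simp
      linear_combination -cM2
    have gPM : (((ρ - 0) / P : ℝ) : ℂ) * ((ρ - 0) / M : ℝ) +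
        ((ζ - r₁) / P : ℝ) * ((ζ - -r₁) / M : ℝ) =
        (ρ ^ 2 + ζ ^ 2 - r₁ ^ 2) / (P * M) := by
      push_cast
      field_simp
      ring
    linear_combination a ^ 2 * gP + b ^ 2 * gM + 2 * a * b * gPM +
      2 * (ρ ^ 2 + ζ ^ 2 - r₁ ^ 2) / (P * M) * hab
  have hL : ((P : ℂ) * M) * ((2 / P : ℝ) * a + (2 / M : ℝ) * b) = 2 * (P * b + M * a) := by
    push_cast
    field_simp
    ring
  have hNG : ((P : ℂ) * a + M * b) * (P * b + M * a) - ((2 * r₁ : ℝ) : ℂ) ^ 2 =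
      (P * M) * (a ^ 2 + b ^ 2 + 2 * (ρ ^ 2 + ζ ^ 2 - r₁ ^ 2) / (P * M)) := by
    push_cast
    field_simp
    linear_combination (P ^ 2 + M ^ 2 : ℂ) * hab + cP2 + cM2
  rw [← ernst_algebra (hD ρ ζ) hD' hG hL hNG, ← lapP, ← lapM]
  push_cast
  ring
end

section
/- Let σ₁ = [[0,1],[1,0]] and σ₃ = [[1,0],[0,−1]]. Fix real numbers r₁ > 0, Ω, Ω_h with Ω_h ≠ 0 and Ω ≠ Ω_h, a complex number f₀ with Re f₀ ≠ 0, and a purely imaginary complex number f₁. Write e^{2U₀} = Re f₀ and b₀ = Im f₀. Define B = [[conj f₀, 1],[f₀, −1]], Λ(k) = (1 − Ω/Ω_h)·I + i k Ω (Re f₀)⁻¹ (σ₁ − I)σ₃, T₁(k) = (2(k−r₁)Ω_h)⁻¹·[[2(k−r₁)Ω_h − i f₁, i],[−i f₁², 2(k−r₁)Ω_h + i f₁]], T₂(k) = entrywise conjugate of T₁(−conj k), and 𝒮(k) = T₁(k)⁻¹ B⁻¹ Λ(k)⁻¹ σ₁σ₃ Λ(k) (conj B) T₂(k) σ₁. Then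 for every k ∈ ℂ with k ≠ ±r₁, the function w(k) := −½ tr 𝒮(k) equals (w₄k⁴ + w₂k² + w₀)/(k² − r₁²), where w₄ = −2Ω²Ω_h²/(e^{2U₀}(Ω−Ω_h)²), w₂ = [|f₀|²(Ω−Ω_h)² + f₁²Ω(Ω−2Ω_h) + 4i f₁ r₁ Ω² Ω_h + Ω_h²(4r₁²Ω² − 1)]/(2e^{2U₀}(Ω−Ω_h)²), and w₀ = −(8e^{2U₀}Ω_h²)⁻¹·[ −2i b₀ (f₁³ − 2i f₁² r₁ Ω_h + f₁ + 2i r₁ Ω_h) − |f₀|²(f₁² − 4i f₁ r₁ Ω_h − 4r₁²Ω_h² + 1) + f₁⁴ + f₁² + 4i f₁ r₁ Ω_h − 4r₁²Ω_h² ]. -/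
/-!
Conjugating `σ₁σ₃` by `Λ` and then sandwiching it between `B⁻¹` and `conj B` gives a very simple
matrix. Write `Λ = c I + q N` with `N = (σ₁ − I)σ₃` nilpotent, and put `s = q / c`, which is linear
in `k`. Then `Λ⁻¹ σ₁σ₃ Λ = σ₁σ₃ − 2 s σ₁ + 2 s² N` (`Lam_conj`). With `f₀ = a + i b`, the map
`X ↦ B⁻¹ X conj B` sends `σ₁` to `σ₃` and `N` to a multiple of the lower left matrix unit, so the
middle factor of `𝒮` becomes `[[i b/a − 2 s, 1/a], [−|f₀|²/a − 4 a s², i b/a + 2 s]]`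
(`middle_factor`).

Writing `f₁ = i p` with `p` real, `T₁` has determinant `1`, since its part of order `(k − r₁)⁻¹` is
nilpotent, so that `T₁⁻¹` and `T₂` are explicit with denominators `2 (k − r₁) Ω_h` and
`2 (k + r₁) Ω_h` (`T1mat_inv`, `T2mat_eq`). Multiplying the three remaining factors leaves a
rational identity in `k`; up to a constant, the product of the two denominators is `k² − r₁²`.
-/

open Complex Matrix

/-- The Pauli matrix `σ₁`. -/
noncomputable def sigma1 : Matrix (Fin 2) (Fin 2) ℂ := !![0, 1; 1, 0]

/-- The Pauli matrix `σ₃`. -/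
noncomputable def sigma3 : Matrix (Fin 2) (Fin 2) ℂ := !![1, 0; 0, -1]

/-- The matrix `B = [[conj f₀, 1],[f₀, −1]]`. -/
noncomputable def Bmat (f₀ : ℂ) : Matrix (Fin 2) (Fin 2) ℂ :=
  !![(starRingEnd ℂ) f₀, 1; f₀, -1]

/-- `Λ(k) = (1 − Ω/Ω_h)·I + i k Ω (Re f₀)⁻¹ (σ₁ − I)σ₃`. -/
noncomputable def LamMat (Ω Ωh : ℝ) (f₀ : ℂ) (k : ℂ) : Matrix (Fin 2) (Fin 2) ℂ :=
  (1 - (Ω : ℂ) / (Ωh : ℂ)) • (1 : Matrix (Fin 2) (Fin 2) ℂ) +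
    (Complex.I * k * (Ω : ℂ) * (((f₀.re : ℂ)))⁻¹) •
      ((sigma1 - 1) * sigma3)

/-- `T₁(k) = (2(k−r₁)Ω_h)⁻¹·[[2(k−r₁)Ω_h − i f₁, i],[−i f₁², 2(k−r₁)Ω_h + i f₁]]`. -/
noncomputable def T1mat (r₁ Ωh : ℝ) (f₁ : ℂ) (k : ℂ) : Matrix (Fin 2) (Fin 2) ℂ :=
  (2 * (k - (r₁ : ℂ)) * (Ωh : ℂ))⁻¹ •
    !![2 * (k - (r₁ : ℂ)) * (Ωh : ℂ) - Complex.I * f₁, Complex.I;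
       -Complex.I * f₁ ^ 2, 2 * (k - (r₁ : ℂ)) * (Ωh : ℂ) + Complex.I * f₁]

/-- `T₂(k)` is the entrywise conjugate of `T₁(−conj k)`. -/
noncomputable def T2mat (r₁ Ωh : ℝ) (f₁ : ℂ) (k : ℂ) : Matrix (Fin 2) (Fin 2) ℂ :=
  (T1mat r₁ Ωh f₁ (-(starRingEnd ℂ) k)).map (starRingEnd ℂ)

/-- The jump matrix `𝒮(k) = T₁(k)⁻¹ B⁻¹ Λ(k)⁻¹ σ₁σ₃ Λ(k) (conj B) T₂(k) σ₁`. -/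
noncomputable def Smat (r₁ Ω Ωh : ℝ) (f₀ f₁ : ℂ) (k : ℂ) : Matrix (Fin 2) (Fin 2) ℂ :=
  (T1mat r₁ Ωh f₁ k)⁻¹ * (Bmat f₀)⁻¹ * (LamMat Ω Ωh f₀ k)⁻¹ * sigma1 * sigma3 *
    LamMat Ω Ωh f₀ k * (Bmat f₀).map (starRingEnd ℂ) * T2mat r₁ Ωh f₁ k * sigma1

/-- `Λ⁻¹ σ₁σ₃ Λ = σ₁σ₃ − 2 s σ₁ + 2 s² N`, written out, with `s` the quotient of the coefficients
of `N = (σ₁ − I)σ₃` and of `I` in `Λ`. -/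
lemma Lam_conj (Ω Ωh : ℝ) (hΩh : Ωh ≠ 0) (hΩ : Ω ≠ Ωh) (f₀ k s : ℂ)
    (hs : s = Complex.I * k * Ω * (f₀.re : ℂ)⁻¹ / (1 - (Ω : ℂ) / Ωh)) :
    (LamMat Ω Ωh f₀ k)⁻¹ * sigma1 * sigma3 * LamMat Ω Ωh f₀ k =
      !![-2 * s ^ 2, -1 - 2 * s - 2 * s ^ 2; 1 - 2 * s + 2 * s ^ 2, 2 * s ^ 2] := by
  have hc : (1 - (Ω : ℂ) / Ωh) ≠ 0 := by
    rw [sub_ne_zero, ne_comm, Ne, div_eq_one_iff_eq (by exact_mod_cast hΩh)]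
    exact_mod_cast hΩ
  set c : ℂ := 1 - (Ω : ℂ) / Ωh with hcdef
  have hL : LamMat Ω Ωh f₀ k = c • !![1 - s, -s; s, 1 + s] := by
    have hq : Complex.I * k * Ω * (f₀.re : ℂ)⁻¹ = c * s := by
      rw [hs, mul_div_cancel₀ _ hc]
    rw [LamMat, hq, ← hcdef]
    ext i j
    fin_cases i <;> fin_cases j <;> simp [sigma1, sigma3, Matrix.mul_apply] <;> ring
  have hinv : (LamMat Ω Ωh f₀ k)⁻¹ = c⁻¹ • !![1 + s, s; -s, 1 - s] := by
    apply Matrix.inv_eq_left_inv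
    rw [hL, Matrix.smul_mul, Matrix.mul_smul, smul_smul, inv_mul_cancel₀ hc, one_smul,
      Matrix.mul_fin_two, Matrix.one_fin_two]
    congr! 3 <;> ring_nf
  rw [hinv, hL]
  simp only [Matrix.smul_mul, Matrix.mul_smul, smul_smul, mul_inv_cancel₀ hc, one_smul,
    sigma1, sigma3, Matrix.mul_fin_two]
  ext i j
  fin_cases i <;> fin_cases j <;> simp <;> ring

lemma Bmat_inv (f₀ : ℂ) (hf₀ : f₀.re ≠ 0) :
    (Bmat f₀)⁻¹ = (2 * (f₀.re : ℂ))⁻¹ • !![1, 1; f₀, -(starRingEnd ℂ) f₀] := by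
  have ha : (f₀.re : ℂ) ≠ 0 := by exact_mod_cast hf₀
  have h2 : (starRingEnd ℂ) f₀ = 2 * f₀.re - f₀ := by
    rw [eq_sub_iff_add_eq, add_comm, Complex.add_conj]; push_cast; ring
  apply Matrix.inv_eq_left_inv
  rw [Bmat, h2]
  ext i j
  fin_cases i <;> fin_cases j <;> simp [Matrix.mul_apply] <;> field_simp <;> ring

/-- The factors of `𝒮` between `T₁⁻¹` and `T₂`: under `X ↦ B⁻¹ X conj B` the matrix `σ₁` becomes
`σ₃`, so the two linear terms in `s` end up on the diagonal with opposite signs. -/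
lemma middle_factor (Ω Ωh : ℝ) (hΩh : Ωh ≠ 0) (hΩ : Ω ≠ Ωh) (f₀ k s : ℂ) (hf₀ : f₀.re ≠ 0)
    (hs : s = Complex.I * k * Ω * (f₀.re : ℂ)⁻¹ / (1 - (Ω : ℂ) / Ωh)) :
    (Bmat f₀)⁻¹ * ((LamMat Ω Ωh f₀ k)⁻¹ * sigma1 * sigma3 * LamMat Ω Ωh f₀ k) *
        (Bmat f₀).map (starRingEnd ℂ) =
      !![Complex.I * f₀.im / f₀.re - 2 * s, 1 / f₀.re;
        -(Complex.normSq f₀ : ℂ) / f₀.re - 4 * f₀.re * s ^ 2,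
        Complex.I * f₀.im / f₀.re + 2 * s] := by
  have ha : (f₀.re : ℂ) ≠ 0 := by exact_mod_cast hf₀
  have h1 : f₀ = f₀.re + f₀.im * Complex.I := (Complex.re_add_im f₀).symm
  have h2 : (starRingEnd ℂ) f₀ = f₀.re - f₀.im * Complex.I := by
    apply Complex.ext <;> simp
  have hB : (Bmat f₀).map (starRingEnd ℂ) = !![f₀, 1; (starRingEnd ℂ) f₀, -1] := by
    ext i j
    fin_cases i <;> fin_cases j <;> simp [Bmat]
  rw [Lam_conj Ω Ωh hΩh hΩ f₀ k s hs, Bmat_inv f₀ hf₀, hB, h2, Complex.normSq_apply]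
  generalize f₀.re = a at *
  generalize f₀.im = b at *
  rw [h1]
  simp only [Matrix.smul_mul, Matrix.mul_fin_two]
  have hI := Complex.I_sq
  ext i j
  fin_cases i <;> fin_cases j <;> simp <;> field_simp <;> grind

/-- For `f₁ = i p` the matrix `T₁` has determinant `1`, so its inverse is its adjugate. -/
lemma T1mat_inv (r₁ Ωh p : ℝ) (hΩh : Ωh ≠ 0) (k : ℂ) (hk : k ≠ r₁) :
    (T1mat r₁ Ωh (p * Complex.I) k)⁻¹ = (2 * (k - r₁) * (Ωh : ℂ))⁻¹ •
      !![2 * (k - r₁) * Ωh - p, -Complex.I;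
        -Complex.I * p ^ 2, 2 * (k - r₁) * Ωh + p] := by
  have hx : 2 * (k - r₁) * (Ωh : ℂ) ≠ 0 :=
    mul_ne_zero (mul_ne_zero two_ne_zero (sub_ne_zero.2 hk)) (by exact_mod_cast hΩh)
  have hI := Complex.I_sq
  apply Matrix.inv_eq_left_inv
  rw [T1mat]
  generalize 2 * (k - r₁) * (Ωh : ℂ) = x at *
  simp only [Matrix.smul_mul, Matrix.mul_smul, smul_smul, Matrix.mul_fin_two]
  ext i j
  fin_cases i <;> fin_cases j <;> simp <;> field_simp <;> grind

lemma T2mat_eq (r₁ Ωh p : ℝ) (k : ℂ) :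
    T2mat r₁ Ωh (p * Complex.I) k = (2 * (k + r₁) * (Ωh : ℂ))⁻¹ •
      !![2 * (k + r₁) * Ωh - p, Complex.I;
        Complex.I * p ^ 2, 2 * (k + r₁) * Ωh + p] := by
  have hI := Complex.I_sq
  have h2 : (starRingEnd ℂ) 2 = 2 := map_ofNat _ 2
  -- Conjugation at `−conj k` turns the denominator into the negative of `2 (k + r₁) Ω_h`.
  have hy : (2 * (-k - r₁) * (Ωh : ℂ))⁻¹ = -(2 * (k + r₁) * (Ωh : ℂ))⁻¹ := by
    rw [← inv_neg]; congr 1; ring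
  ext i j
  fin_cases i <;> fin_cases j <;>
    simp only [T2mat, T1mat, Matrix.map_apply, Matrix.smul_apply, smul_eq_mul, map_mul, map_inv₀,
      map_sub, map_neg, Complex.conj_conj, Complex.conj_ofReal, h2, hy] <;>
    simp [h2] <;> grind

/-- The function `w(k) = −½ tr 𝒮(k)` is the rational function
`(w₄k⁴ + w₂k² + w₀)/(k² − r₁²)` with the explicit coefficients (5.10a–c) of the
paper, for all `k ≠ ±r₁`. -/
theorem trace_Smat_rational (r₁ Ω Ωh : ℝ) (hr₁ : 0 < r₁) (hΩh : Ωh ≠ 0)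
    (hΩ : Ω ≠ Ωh) (f₀ f₁ : ℂ) (hf₀ : f₀.re ≠ 0) (hf₁ : f₁.re = 0) :
    let e2U₀ : ℂ := (f₀.re : ℂ)
    let b₀ : ℂ := (f₀.im : ℂ)
    let w₄ : ℂ := -2 * (Ω : ℂ) ^ 2 * (Ωh : ℂ) ^ 2 / (e2U₀ * ((Ω : ℂ) - (Ωh : ℂ)) ^ 2)
    let w₂ : ℂ :=
      ((Complex.normSq f₀ : ℂ) * ((Ω : ℂ) - (Ωh : ℂ)) ^ 2 +
          f₁ ^ 2 * (Ω : ℂ) * ((Ω : ℂ) - 2 * (Ωh : ℂ)) +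
          4 * Complex.I * f₁ * (r₁ : ℂ) * (Ω : ℂ) ^ 2 * (Ωh : ℂ) +
          (Ωh : ℂ) ^ 2 * (4 * (r₁ : ℂ) ^ 2 * (Ω : ℂ) ^ 2 - 1)) /
        (2 * e2U₀ * ((Ω : ℂ) - (Ωh : ℂ)) ^ 2)
    let w₀ : ℂ :=
      -(8 * e2U₀ * (Ωh : ℂ) ^ 2)⁻¹ *
        (-2 * Complex.I * b₀ *
            (f₁ ^ 3 - 2 * Complex.I * f₁ ^ 2 * (r₁ : ℂ) * (Ωh : ℂ) + f₁ +
              2 * Complex.I * (r₁ : ℂ) * (Ωh : ℂ)) -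
          (Complex.normSq f₀ : ℂ) *
            (f₁ ^ 2 - 4 * Complex.I * f₁ * (r₁ : ℂ) * (Ωh : ℂ) -
              4 * (r₁ : ℂ) ^ 2 * (Ωh : ℂ) ^ 2 + 1) +
          f₁ ^ 4 + f₁ ^ 2 + 4 * Complex.I * f₁ * (r₁ : ℂ) * (Ωh : ℂ) -
          4 * (r₁ : ℂ) ^ 2 * (Ωh : ℂ) ^ 2)
    ∀ k : ℂ, k ≠ (r₁ : ℂ) → k ≠ -(r₁ : ℂ) →
      -(1 / 2 : ℂ) * (Smat r₁ Ω Ωh f₀ f₁ k).trace =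
        (w₄ * k ^ 4 + w₂ * k ^ 2 + w₀) / (k ^ 2 - (r₁ : ℂ) ^ 2) := by
  intro e2U₀ b₀ w₄ w₂ w₀ k hk hk'
  obtain ⟨p, rfl⟩ : ∃ p : ℝ, f₁ = p * Complex.I :=
    ⟨f₁.im, by apply Complex.ext <;> simp [hf₁]⟩
  have ha : (f₀.re : ℂ) ≠ 0 := by exact_mod_cast hf₀
  have hH : (Ωh : ℂ) ≠ 0 := by exact_mod_cast hΩh
  have hD : (Ω : ℂ) - Ωh ≠ 0 := sub_ne_zero.2 (by exact_mod_cast hΩ)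
  have hm : k - r₁ ≠ 0 := sub_ne_zero.2 hk
  have hp : k + r₁ ≠ 0 := by rwa [← sub_neg_eq_add, sub_ne_zero]
  have hI := Complex.I_sq
  obtain ⟨s, hs⟩ : ∃ s : ℂ, s = Complex.I * k * Ω * (f₀.re : ℂ)⁻¹ / (1 - (Ω : ℂ) / Ωh) :=
    ⟨_, rfl⟩
  have hS : Smat r₁ Ω Ωh f₀ (p * Complex.I) k = (T1mat r₁ Ωh (p * Complex.I) k)⁻¹ *
      ((Bmat f₀)⁻¹ * ((LamMat Ω Ωh f₀ k)⁻¹ * sigma1 * sigma3 * LamMat Ω Ωh f₀ k) *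
        (Bmat f₀).map (starRingEnd ℂ)) * T2mat r₁ Ωh (p * Complex.I) k * sigma1 := by
    simp only [Smat, Matrix.mul_assoc]
  have hs' : s = -(Complex.I * k * Ω * Ωh / (f₀.re * ((Ω : ℂ) - Ωh))) := by
    have : (1 - (Ω : ℂ) / Ωh) = -(((Ω : ℂ) - Ωh) / Ωh) := by field_simp; ring
    rw [hs, this]; field_simp
  have hn : (Complex.normSq f₀ : ℂ) = (f₀.re : ℂ) ^ 2 + (f₀.im : ℂ) ^ 2 := by
    rw [Complex.normSq_apply]; push_cast; ring
  rw [hS, middle_factor Ω Ωh hΩh hΩ f₀ k s hf₀ hs, T1mat_inv r₁ Ωh p hΩh k hk, T2mat_eq,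
    show k ^ 2 - (r₁ : ℂ) ^ 2 = (k - r₁) * (k + r₁) by ring]
  simp only [Matrix.smul_mul, Matrix.mul_smul, smul_smul, sigma1, Matrix.mul_fin_two,
    Matrix.trace_smul, Matrix.trace_fin_two_of, smul_eq_mul]
  simp only [w₄, w₂, w₀, e2U₀, b₀, hs', hn]
  generalize (f₀.re : ℂ) = a at *
  generalize (f₀.im : ℂ) = b at *
  field_simp
  grind
end
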